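/- Let d ≥ 2, let E ⊂ ℝ^d be compact, and let μ be a Borel probability measure with support contained in E. If the Mattila integral M(μ) = ∫_0^∞ ( ∫_{S^{d−1}} |μ̂(rω)|² dσ(ω) )² r^{d−1} dr is finite, then the distance set Δ(E) = { |x−y| : x, y ∈ E } ⊂ ℝ has positive one-dimensional Lebesgue measure. -/

import Mathlib

open MeasureTheory Metric
open scoped ENNReal RealInnerProductSpace

/-- The Fourier transform `μ̂(ξ) = ∫ e^{-2πi x·ξ} dμ(x)` of a finite Borel measure on `ℝ^d`. -/
noncomputable def measureFT {d : ℕ} (μ : Measure (EuclideanSpace ℝ (Fin d)))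
    (ξ : EuclideanSpace ℝ (Fin d)) : ℂ :=
  ∫ x, Complex.exp (((-2 * Real.pi * ⟪x, ξ⟫ : ℝ) : ℂ) * Complex.I) ∂μ

open scoped FourierTransform

section FourierTransformOfMeasures

variable {d : ℕ}

local notation "V" => EuclideanSpace ℝ (Fin d)

lemma measureFT_eq_charFun (μ : Measure V) (ξ : V) :
    measureFT μ ξ = charFun μ ((-2 * Real.pi) • ξ) := by
  simp only [measureFT, charFun_apply, inner_smul_right]

lemma continuous_measureFT (μ : Measure V) [IsFiniteMeasure μ] : Continuous (measureFT μ) := by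
  have h : measureFT μ = fun ξ => charFun μ ((-2 * Real.pi) • ξ) :=
    funext (measureFT_eq_charFun μ)
  rw [h]
  exact continuous_charFun.comp (continuous_const_smul _)

lemma measureFT_zero (μ : Measure V) [IsProbabilityMeasure μ] : measureFT μ 0 = 1 := by
  simp [measureFT]

/-- The multiplication formula `∫ 𝓕φ dν = ∫ φ ν̂` for an integrable function and a finite
measure. -/
lemma integral_fourier_eq_integral_mul_measureFT (ν : Measure V) [IsFiniteMeasure ν]
    {φ : V → ℂ} (hφ : Integrable φ) :
    ∫ x, 𝓕 φ x ∂ν = ∫ ξ, φ ξ * measureFT ν ξ := by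
  have h := VectorFourier.integral_fourierIntegral_smul_eq_flip (e := 𝐞) (μ := volume) (ν := ν)
    (L := innerₗ V) (f := φ) (g := fun _ => (1 : ℂ)) Real.continuous_fourierChar
    (by exact continuous_inner) hφ (integrable_const 1)
  simp only [smul_eq_mul, mul_one] at h
  refine h.trans (integral_congr_ae (.of_forall fun ξ => ?_))
  simp only [VectorFourier.fourierIntegral, measureFT]
  congr 1
  refine integral_congr_ae (.of_forall fun x => ?_)
  simp [Circle.smul_def, Real.fourierChar_apply]

/-- A smooth cutoff of a compact null set, with arbitrarily small `L²` norm. -/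
lemma exists_schwartz_one_on_compact_integral_norm_sq_le {K : Set V} (hK : IsCompact K)
    (hK0 : volume K = 0) {ε : ℝ} (hε : 0 < ε) :
    ∃ ψ : SchwartzMap V ℂ, ∃ f : V → ℝ, (∀ x, ψ x = f x) ∧ (∀ x, 0 ≤ f x) ∧
      (∀ x ∈ K, f x = 1) ∧ ∫ x, ‖ψ x‖ ^ 2 ≤ ε := by
  obtain ⟨U, hKU, hUo, hUε⟩ := K.exists_isOpen_lt_of_lt (μ := volume) (ENNReal.ofReal ε)
    (by simpa [hK0] using hε)
  obtain ⟨R, hR⟩ := hK.isBounded.subset_ball 0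
  have hWo : IsOpen (U ∩ ball (0 : V) R) := hUo.inter isOpen_ball
  obtain ⟨f, hf, hfr, hfs, hf1⟩ := exists_contMDiff_support_eq_eq_one_iff (n := ⊤)
    (modelWithCornersSelf ℝ V) hWo hK.isClosed (Set.subset_inter hKU hR)
  have hf01 : ∀ x, f x ∈ Set.Icc (0 : ℝ) 1 := fun x => hfr ⟨x, rfl⟩
  have hcs : HasCompactSupport (fun x => (f x : ℂ)) := by
    refine HasCompactSupport.intro (isCompact_closedBall (0 : V) R) fun x hx => ?_
    have : x ∉ Function.support f := by
      rw [hfs]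
      exact fun h => hx (ball_subset_closedBall h.2)
    simpa using this
  have hsm : ContDiff ℝ ((⊤ : ℕ∞) : WithTop ℕ∞) (fun x => (f x : ℂ)) :=
    Complex.ofRealCLM.contDiff.comp hf.contDiff
  refine ⟨hcs.toSchwartzMap hsm, f, fun x => rfl, fun x => (hf01 x).1, fun x hx => (hf1 x).1 hx, ?_⟩
  have hWε : volume (U ∩ ball (0 : V) R) ≤ ENNReal.ofReal ε :=
    (measure_mono Set.inter_subset_left).trans hUε.le
  have hWfin : volume (U ∩ ball (0 : V) R) ≠ ⊤ := (hWε.trans_lt ENNReal.ofReal_lt_top).ne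
  calc ∫ x, ‖hcs.toSchwartzMap hsm x‖ ^ 2
      ≤ ∫ x, (U ∩ ball (0 : V) R).indicator (fun _ => (1 : ℝ)) x := by
        refine integral_mono_of_nonneg (.of_forall fun x => by positivity) ?_ (.of_forall fun x => ?_)
        · exact (integrable_indicator_iff hWo.measurableSet).2 (integrableOn_const hWfin)
        · by_cases hx : x ∈ U ∩ ball (0 : V) R
          · have := hf01 x
            simpa [hx, abs_of_nonneg this.1] using this.2
          · have : f x = 0 := by
              rw [← hfs] at hx
              simpa using hx
            simp [hx, this]
    _ = volume.real (U ∩ ball (0 : V) R) := by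
        rw [integral_indicator_const _ hWo.measurableSet]; simp
    _ ≤ ε := ENNReal.toReal_le_of_le_ofReal hε.le hWε

/-- A finite measure whose Fourier transform is square integrable does not charge compact
Lebesgue null sets. -/
lemma measure_eq_zero_of_integrable_norm_sq_measureFT (ν : Measure V) [IsFiniteMeasure ν]
    (hν : Integrable fun ξ => ‖measureFT ν ξ‖ ^ 2) {K : Set V} (hK : IsCompact K)
    (hK0 : volume K = 0) : ν K = 0 := by
  set C : ℝ := ∫ ξ, ‖measureFT ν ξ‖ ^ 2
  have key : ∀ t : ℝ, 0 < t → ν.real K ≤ t * ((1 + C) / 2) := by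
    intro t ht
    obtain ⟨ψ, f, hψf, hf0, hf1, hψ2⟩ :=
      exists_schwartz_one_on_compact_integral_norm_sq_le hK hK0 (ε := t ^ 2) (by positivity)
    set φ : SchwartzMap V ℂ := 𝓕⁻ ψ with hφ
    have hφψ : 𝓕 φ = ψ := by simp [hφ]
    have hφ2 : ∫ x, ‖φ x‖ ^ 2 ≤ t ^ 2 := by
      rw [← SchwartzMap.integral_norm_sq_fourier, hφψ]; exact hψ2
    have hφi : Integrable fun x => ‖φ x‖ ^ 2 := by
      simpa using (φ.memLp 2 volume).integrable_norm_pow (by norm_num)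
    have hmul : ∫ x, ψ x ∂ν = ∫ ξ, φ ξ * measureFT ν ξ := by
      rw [← integral_fourier_eq_integral_mul_measureFT ν φ.integrable, ← hφψ]
      rfl
    have hψν : Integrable ψ ν := ψ.integrable
    have hfν : Integrable f ν := by
      have := hψν.re
      simpa [hψf] using this
    have h1 : ν.real K ≤ ∫ x, f x ∂ν := by
      calc ν.real K = ∫ x, K.indicator (fun _ => (1 : ℝ)) x ∂ν := by
            rw [integral_indicator_const _ hK.measurableSet]; simp
        _ ≤ ∫ x, f x ∂ν := by
            refine integral_mono_of_nonneg
              (.of_forall fun x => Set.indicator_nonneg (fun _ _ => zero_le_one) x) hfν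
              (.of_forall fun x => ?_)
            by_cases hx : x ∈ K
            · simp [hx, hf1 x hx]
            · simpa [hx] using hf0 x
    have h2 : ∫ x, f x ∂ν ≤ ‖∫ x, ψ x ∂ν‖ := by
      simp_rw [hψf]
      rw [integral_complex_ofReal, Complex.norm_real]
      exact le_abs_self _
    have h3 : ‖∫ ξ, φ ξ * measureFT ν ξ‖ ≤
        ∫ ξ, (t⁻¹ / 2 * ‖φ ξ‖ ^ 2 + t / 2 * ‖measureFT ν ξ‖ ^ 2) := by
      refine norm_integral_le_of_norm_le ((hφi.const_mul _).add (hν.const_mul _))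
        (.of_forall fun ξ => ?_)
      rw [norm_mul]
      have h4 : t⁻¹ / 2 * ‖φ ξ‖ ^ 2 + t / 2 * ‖measureFT ν ξ‖ ^ 2 - ‖φ ξ‖ * ‖measureFT ν ξ‖
          = t⁻¹ / 2 * (‖φ ξ‖ - t * ‖measureFT ν ξ‖) ^ 2 := by
        field_simp; ring
      have h5 : 0 ≤ t⁻¹ / 2 * (‖φ ξ‖ - t * ‖measureFT ν ξ‖) ^ 2 := by positivity
      linarith
    rw [integral_add (hφi.const_mul _) (hν.const_mul _), integral_const_mul,
      integral_const_mul] at h3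
    have h6 : t⁻¹ / 2 * ∫ ξ, ‖φ ξ‖ ^ 2 ≤ t / 2 := by
      calc t⁻¹ / 2 * ∫ ξ, ‖φ ξ‖ ^ 2 ≤ t⁻¹ / 2 * t ^ 2 := by gcongr
        _ = t / 2 := by field_simp
    rw [hmul] at h2
    linarith
  have hlim : Filter.Tendsto (fun t : ℝ => t * ((1 + C) / 2)) (nhdsWithin 0 (Set.Ioi 0))
      (nhds 0) := by
    have : Continuous fun t : ℝ => t * ((1 + C) / 2) := by fun_prop
    simpa using (this.tendsto 0).mono_left nhdsWithin_le_nhds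
  have hle : ν.real K ≤ 0 :=
    ge_of_tendsto hlim (by filter_upwards [self_mem_nhdsWithin] with t ht using key t ht)
  exact (measureReal_eq_zero_iff).1 (le_antisymm hle measureReal_nonneg)

end FourierTransformOfMeasures

section SphereMeasure

lemma hausdorffMeasure_sphere_pos (d : ℕ) (hd : 1 ≤ d) :
    0 < μH[(d : ℝ) - 1] (sphere (0 : EuclideanSpace ℝ (Fin d)) 1) := by
  obtain ⟨n, rfl⟩ : ∃ n, d = n + 1 := ⟨d - 1, by omega⟩
  let f : EuclideanSpace ℝ (Fin (n + 1)) → (Fin n → ℝ) := fun x i => x i.succ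
  have hf : LipschitzWith 1 f := by
    refine LipschitzWith.of_dist_le_mul fun x y => ?_
    rw [NNReal.coe_one, one_mul, dist_pi_le_iff dist_nonneg]
    intro i
    rw [dist_eq_norm, dist_eq_norm]
    exact PiLp.norm_apply_le (x - y) i.succ
  let O : Set (Fin n → ℝ) := {v | ∑ i, v i ^ 2 < 1}
  have hO : IsOpen O := isOpen_lt (by fun_prop) continuous_const
  have hO0 : (0 : Fin n → ℝ) ∈ O := by simp [O]
  have hsub : O ⊆ f '' sphere (0 : EuclideanSpace ℝ (Fin (n + 1))) 1 := by
    intro v hv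
    have hv' : ∑ i, v i ^ 2 < 1 := hv
    refine ⟨WithLp.toLp 2 (Fin.cons (√(1 - ∑ i, v i ^ 2)) v), ?_, ?_⟩
    · rw [mem_sphere_zero_iff_norm, EuclideanSpace.norm_eq, Real.sqrt_eq_one]
      simp [Fin.sum_univ_succ, Real.sq_sqrt (sub_nonneg.2 hv'.le)]
    · ext i
      simp [f]
  have hdim : ((n + 1 : ℕ) : ℝ) - 1 = (Fintype.card (Fin n) : ℝ) := by simp
  rw [hdim]
  calc (0 : ℝ≥0∞) < volume O := hO.measure_pos volume ⟨0, hO0⟩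
    _ ≤ volume (f '' sphere 0 1) := measure_mono hsub
    _ = μH[(Fintype.card (Fin n) : ℝ)] (f '' sphere 0 1) := by rw [hausdorffMeasure_pi_real]
    _ ≤ ((1 : NNReal) : ℝ≥0∞) ^ (Fintype.card (Fin n) : ℝ) *
          μH[(Fintype.card (Fin n) : ℝ)] (sphere 0 1) :=
        hf.hausdorffMeasure_image_le (Nat.cast_nonneg _) _
    _ = _ := by simp

variable {d : ℕ}

local notation "V" => EuclideanSpace ℝ (Fin d)

lemma measurePreserving_hausdorffMeasure_sphere (s : ℝ) (e : V ≃ₗᵢ[ℝ] V) :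
    MeasurePreserving e (μH[s].restrict (sphere (0 : V) 1)) (μH[s].restrict (sphere (0 : V) 1)) := by
  have h := (e.toIsometryEquiv.measurePreserving_hausdorffMeasure s).restrict_preimage
    (s := sphere (0 : V) 1) isClosed_sphere.measurableSet
  have hpre : (e.toIsometryEquiv : V → V) ⁻¹' sphere (0 : V) 1 = sphere (0 : V) 1 := by
    ext x
    simp
  rw [hpre] at h
  exact h

/-- The Mattila integral of a probability measure can only be finite if the measure used on the
sphere is finite. -/
lemma measure_lt_top_of_lintegral_measureFT_lt_top (μ : Measure V) [IsProbabilityMeasure μ]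
    (σ : Measure V) (n : ℕ)
    (hM : ∫⁻ r in Set.Ioi (0 : ℝ),
        (∫⁻ ω in sphere (0 : V) 1, (‖measureFT μ (r • ω)‖₊ : ℝ≥0∞) ^ 2 ∂σ) ^ 2
          * ENNReal.ofReal (r ^ n) < ⊤) :
    σ (sphere (0 : V) 1) < ⊤ := by
  by_contra htop
  rw [not_lt, top_le_iff] at htop
  have hc : ∀ᶠ ξ in nhds (0 : V), (1 / 2 : ℝ) < ‖measureFT μ ξ‖ := by
    refine (continuous_measureFT μ).norm.continuousAt.eventually_const_lt ?_
    norm_num [measureFT_zero]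
  obtain ⟨ρ, hρ, hball⟩ := Metric.eventually_nhds_iff.1 hc
  refine hM.ne (top_le_iff.1 ?_)
  calc (⊤ : ℝ≥0∞) = ∫⁻ r in Set.Ioo (0 : ℝ) ρ, ⊤ := by
        simp [ENNReal.top_mul, hρ]
    _ ≤ ∫⁻ r in Set.Ioo (0 : ℝ) ρ,
          (∫⁻ ω in sphere (0 : V) 1, (‖measureFT μ (r • ω)‖₊ : ℝ≥0∞) ^ 2 ∂σ) ^ 2
            * ENNReal.ofReal (r ^ n) := by
        refine setLIntegral_mono' measurableSet_Ioo fun r hr => ?_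
        have hinner : ∫⁻ ω in sphere (0 : V) 1, (‖measureFT μ (r • ω)‖₊ : ℝ≥0∞) ^ 2 ∂σ = ⊤ := by
          rw [← top_le_iff]
          calc (⊤ : ℝ≥0∞) = ∫⁻ ω in sphere (0 : V) 1, (ENNReal.ofReal (1 / 2)) ^ 2 ∂σ := by
                rw [setLIntegral_const, htop, ENNReal.mul_top]
                simp
            _ ≤ _ := by
                refine setLIntegral_mono' isClosed_sphere.measurableSet fun ω hω => ?_
                gcongr
                have hlt : dist (r • ω) 0 < ρ := by
                  rw [dist_zero_right, norm_smul, mem_sphere_zero_iff_norm.1 hω, mul_one,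
                    Real.norm_of_nonneg hr.1.le]
                  exact hr.2
                rw [← enorm_eq_nnnorm, ← ofReal_norm]
                exact ENNReal.ofReal_le_ofReal (hball hlt).le
        have hpos : ENNReal.ofReal (r ^ n) ≠ 0 := by
          simpa using pow_pos hr.1 n
        rw [hinner]
        simp [ENNReal.top_mul, hpos]
    _ ≤ _ := lintegral_mono_set Set.Ioo_subset_Ioi_self

end SphereMeasure

section RadialDistanceMeasure

variable {d : ℕ}

local notation "V" => EuclideanSpace ℝ (Fin d)

/-- The Fourier transform of a rotation invariant measure is radial. -/
lemma measureFT_eq_of_norm_eq {σ : Measure V} (hσ : ∀ e : V ≃ₗᵢ[ℝ] V, MeasurePreserving e σ σ)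
    {ξ η : V} (h : ‖ξ‖ = ‖η‖) : measureFT σ ξ = measureFT σ η := by
  obtain ⟨e, rfl⟩ : ∃ e : V ≃ₗᵢ[ℝ] V, e ξ = η := ⟨_, Submodule.reflection_sub h⟩
  simp only [measureFT]
  refine Eq.trans ?_ ((hσ e).integral_comp e.toHomeomorph.measurableEmbedding _)
  simp only [LinearIsometryEquiv.inner_map_map]

/-- The image of `μ × μ × σ` under `(x, y, ω) ↦ |x - y| ω`: for `σ` rotation invariant on the
sphere, this is the radial symmetrization of the law of `x - y`. -/
noncomputable def radialDistanceMeasure (μ σ : Measure V) : Measure V :=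
  ((μ.prod μ).prod σ).map fun p => ‖p.1.1 - p.1.2‖ • p.2

instance (μ σ : Measure V) [IsFiniteMeasure μ] [IsFiniteMeasure σ] :
    IsFiniteMeasure (radialDistanceMeasure μ σ) := by
  unfold radialDistanceMeasure
  infer_instance

lemma integral_prod_exp_inner_sub (μ : Measure V) [IsFiniteMeasure μ] (ξ : V) :
    ∫ p, Complex.exp (((-2 * Real.pi * ⟪p.1 - p.2, ξ⟫ : ℝ) : ℂ) * Complex.I) ∂(μ.prod μ) =
      ((‖measureFT μ ξ‖ ^ 2 : ℝ) : ℂ) := by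
  have hsplit : ∀ p : V × V,
      Complex.exp (((-2 * Real.pi * ⟪p.1 - p.2, ξ⟫ : ℝ) : ℂ) * Complex.I) =
        Complex.exp (((-2 * Real.pi * ⟪p.1, ξ⟫ : ℝ) : ℂ) * Complex.I) *
          (starRingEnd ℂ) (Complex.exp (((-2 * Real.pi * ⟪p.2, ξ⟫ : ℝ) : ℂ) * Complex.I)) := by
    intro p
    rw [← Complex.exp_conj, ← Complex.exp_add, inner_sub_left]
    congr 1
    simp only [map_mul, Complex.conj_ofReal, Complex.conj_I]
    push_cast
    ring
  simp_rw [hsplit]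
  rw [integral_prod_mul
    (fun x : V => Complex.exp (((-2 * Real.pi * ⟪x, ξ⟫ : ℝ) : ℂ) * Complex.I))
    (fun y : V => (starRingEnd ℂ)
      (Complex.exp (((-2 * Real.pi * ⟪y, ξ⟫ : ℝ) : ℂ) * Complex.I))), integral_conj]
  change measureFT μ ξ * (starRingEnd ℂ) (measureFT μ ξ) = _
  rw [Complex.mul_conj, Complex.normSq_eq_norm_sq]

lemma measureFT_radialDistanceMeasure (μ σ : Measure V) [IsFiniteMeasure μ] [IsFiniteMeasure σ]
    (hσ : ∀ e : V ≃ₗᵢ[ℝ] V, MeasurePreserving e σ σ) (ξ : V) :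
    measureFT (radialDistanceMeasure μ σ) ξ =
      ((∫ ω, ‖measureFT μ (‖ξ‖ • ω)‖ ^ 2 ∂σ : ℝ) : ℂ) := by
  have hint : ∀ g : (V × V) × V → ℝ, Continuous g →
      Integrable (fun p => Complex.exp ((g p : ℂ) * Complex.I)) ((μ.prod μ).prod σ) := by
    intro g hg
    refine Integrable.of_bound (Continuous.aestronglyMeasurable (by fun_prop)) 1
      (.of_forall fun p => (Complex.norm_exp_ofReal_mul_I _).le)
  calc measureFT (radialDistanceMeasure μ σ) ξ
      = ∫ p, Complex.exp (((-2 * Real.pi * ⟪‖p.1.1 - p.1.2‖ • p.2, ξ⟫ : ℝ) : ℂ) * Complex.I)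
          ∂((μ.prod μ).prod σ) := by
        rw [measureFT, radialDistanceMeasure, integral_map]
        · exact Continuous.aemeasurable (by fun_prop)
        · exact Continuous.aestronglyMeasurable (by fun_prop)
    _ = ∫ q, measureFT σ (‖q.1 - q.2‖ • ξ) ∂(μ.prod μ) := by
        rw [integral_prod _ (hint (fun p => -2 * Real.pi * ⟪‖p.1.1 - p.1.2‖ • p.2, ξ⟫)
          (by fun_prop))]
        simp only [measureFT, inner_smul_left, inner_smul_right, RCLike.conj_to_real]
    _ = ∫ q, measureFT σ (‖ξ‖ • (q.1 - q.2)) ∂(μ.prod μ) := by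
        congr 1
        ext q
        refine measureFT_eq_of_norm_eq hσ ?_
        simp [norm_smul, mul_comm]
    _ = ∫ q, ∫ ω, Complex.exp
          (((-2 * Real.pi * ⟪q.1 - q.2, ‖ξ‖ • ω⟫ : ℝ) : ℂ) * Complex.I) ∂σ ∂(μ.prod μ) := by
        simp only [measureFT, inner_smul_right, real_inner_comm]
    _ = ∫ ω, ∫ q, Complex.exp
          (((-2 * Real.pi * ⟪q.1 - q.2, ‖ξ‖ • ω⟫ : ℝ) : ℂ) * Complex.I) ∂(μ.prod μ) ∂σ := by
        refine integral_integral_swap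
          (hint (fun p => -2 * Real.pi * ⟪p.1.1 - p.1.2, ‖ξ‖ • p.2⟫) (by fun_prop))
    _ = _ := by
        simp_rw [integral_prod_exp_inner_sub]
        exact integral_ofReal

lemma volume_preimage_norm_eq_zero (hd : 1 ≤ d) {A : Set ℝ} (hA : MeasurableSet A)
    (hA0 : volume A = 0) (hfin : volume ((fun x : V => ‖x‖) ⁻¹' A) ≠ ⊤) :
    volume ((fun x : V => ‖x‖) ⁻¹' A) = 0 := by
  have : Nonempty (Fin d) := ⟨⟨0, hd⟩⟩
  have h := integral_fun_norm_addHaar (volume : Measure V) (A.indicator fun _ => (1 : ℝ))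
  have hzero : ∫ y in Set.Ioi (0 : ℝ),
      y ^ (Module.finrank ℝ V - 1) • A.indicator (fun _ => (1 : ℝ)) y = 0 := by
    refine integral_eq_zero_of_ae (ae_restrict_of_ae ?_)
    filter_upwards [measure_eq_zero_iff_ae_notMem.1 hA0] with y hy
    simp [hy]
  rw [hzero, smul_zero, smul_zero] at h
  have hpre : ∫ x : V, A.indicator (fun _ => (1 : ℝ)) ‖x‖ =
      volume.real ((fun x : V => ‖x‖) ⁻¹' A) := by
    have : (fun x : V => A.indicator (fun _ => (1 : ℝ)) ‖x‖) =
        ((fun x : V => ‖x‖) ⁻¹' A).indicator fun _ => 1 := by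
      ext x
      exact (Set.indicator_comp_right (fun x : V => ‖x‖)).symm
    rw [this, integral_indicator_const _ (measurable_norm hA)]
    simp
  rw [hpre] at h
  exact (measureReal_eq_zero_iff hfin).1 h

lemma integrable_norm_sq_measureFT_radialDistanceMeasure (hd : 1 ≤ d) (μ σ : Measure V)
    [IsFiniteMeasure μ] [IsFiniteMeasure σ]
    (hσ : ∀ e : V ≃ₗᵢ[ℝ] V, MeasurePreserving e σ σ)
    (hM : ∫⁻ r in Set.Ioi (0 : ℝ),
        (∫⁻ ω, (‖measureFT μ (r • ω)‖₊ : ℝ≥0∞) ^ 2 ∂σ) ^ 2 * ENNReal.ofReal (r ^ (d - 1)) < ⊤) :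
    Integrable fun ξ => ‖measureFT (radialDistanceMeasure μ σ) ξ‖ ^ 2 := by
  have : Nonempty (Fin d) := ⟨⟨0, hd⟩⟩
  set S : ℝ → ℝ := fun r => ∫ ω, ‖measureFT μ (r • ω)‖ ^ 2 ∂σ with hS
  have hS0 : ∀ r, 0 ≤ S r := fun r => integral_nonneg fun ω => by positivity
  have hcont := continuous_measureFT μ
  have hSmeas : StronglyMeasurable S :=
    StronglyMeasurable.integral_prod_right
      (f := fun r : ℝ => fun ω : V => ‖measureFT μ (r • ω)‖ ^ 2)
      (Continuous.stronglyMeasurable (by fun_prop))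
  have hbound : ∀ ξ : V, ‖measureFT μ ξ‖ ≤ μ.real Set.univ := fun ξ => by
    rw [measureFT_eq_charFun]; exact norm_charFun_le _
  have hSl : ∀ r, ∫⁻ ω, (‖measureFT μ (r • ω)‖₊ : ℝ≥0∞) ^ 2 ∂σ = ENNReal.ofReal (S r) := by
    intro r
    rw [hS, ofReal_integral_eq_lintegral_ofReal]
    · congr 1
      ext ω
      rw [ENNReal.ofReal_pow (norm_nonneg _), ofReal_norm]
      rfl
    · refine Integrable.of_bound (Continuous.aestronglyMeasurable (by fun_prop))
        (μ.real Set.univ ^ 2) (.of_forall fun ω => ?_)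
      rw [Real.norm_of_nonneg (by positivity)]
      gcongr
      exact hbound _
    · exact .of_forall fun ω => by positivity
  have hFT : (fun ξ => ‖measureFT (radialDistanceMeasure μ σ) ξ‖ ^ 2) = fun ξ : V => S ‖ξ‖ ^ 2 := by
    ext ξ
    rw [measureFT_radialDistanceMeasure μ σ hσ, Complex.norm_real, Real.norm_eq_abs, sq_abs]
  rw [hFT]
  refine (integrable_fun_norm_addHaar (volume : Measure V) (f := fun r => S r ^ 2)).2 ?_
  rw [finrank_euclideanSpace_fin]
  refine ⟨((measurable_id.pow_const _).mul
    (hSmeas.measurable.pow_const 2)).aestronglyMeasurable, ?_⟩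
  rw [hasFiniteIntegral_iff_ofReal]
  · refine lt_of_eq_of_lt (setLIntegral_congr_fun measurableSet_Ioi fun r hr => ?_) hM
    simp only [hSl, smul_eq_mul]
    rw [mul_comm, ENNReal.ofReal_mul (by positivity), ENNReal.ofReal_pow (hS0 r)]
  · filter_upwards [ae_restrict_mem measurableSet_Ioi] with r hr
    have : (0 : ℝ) < r := hr
    simp only [smul_eq_mul, Pi.zero_apply]
    positivity

end RadialDistanceMeasure

/-- **Mattila's criterion for the Falconer distance problem**: if `E ⊆ ℝ^d`, `d ≥ 2`,
is compact, `μ` is a Borel probability measure supported on `E`, and the Mattila integral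
`∫_0^∞ (∫_{S^{d-1}} |μ̂(rω)|² dσ(ω))² r^{d-1} dr` is finite (here the surface measure `σ`
on the unit sphere is the `(d-1)`-dimensional Hausdorff measure restricted to it), then the
distance set `Δ(E) = {|x-y| : x, y ∈ E}` has positive Lebesgue measure. -/
theorem mattila_integral_finite_implies_distance_set_pos
    (d : ℕ) (hd : 2 ≤ d)
    (E : Set (EuclideanSpace ℝ (Fin d))) (hE : IsCompact E)
    (μ : Measure (EuclideanSpace ℝ (Fin d))) [IsProbabilityMeasure μ]
    (hsupp : μ Eᶜ = 0)
    (hM : ∫⁻ r in Set.Ioi (0 : ℝ),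
        (∫⁻ ω in sphere (0 : EuclideanSpace ℝ (Fin d)) 1,
            (‖measureFT μ (r • ω)‖₊ : ℝ≥0∞) ^ 2 ∂μH[(d : ℝ) - 1]) ^ 2
          * ENNReal.ofReal (r ^ (d - 1)) < ⊤) :
    0 < volume {t : ℝ | ∃ x ∈ E, ∃ y ∈ E, t = dist x y} := by
  have hd1 : 1 ≤ d := by omega
  have hσfin := measure_lt_top_of_lintegral_measureFT_lt_top μ μH[(d : ℝ) - 1] (d - 1) hM
  have hσpos := hausdorffMeasure_sphere_pos d hd1
  set σ : Measure (EuclideanSpace ℝ (Fin d)) :=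
    μH[(d : ℝ) - 1].restrict (sphere (0 : EuclideanSpace ℝ (Fin d)) 1) with hσ
  have : IsFiniteMeasure σ := ⟨by simpa [hσ] using hσfin⟩
  have hrot : ∀ e : EuclideanSpace ℝ (Fin d) ≃ₗᵢ[ℝ] EuclideanSpace ℝ (Fin d),
      MeasurePreserving e σ σ := measurePreserving_hausdorffMeasure_sphere _
  have hL2 := integrable_norm_sq_measureFT_radialDistanceMeasure hd1 μ σ hrot hM
  set A : Set ℝ := {t : ℝ | ∃ x ∈ E, ∃ y ∈ E, t = dist x y} with hA
  have hAc : IsCompact A := by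
    have : A = (fun p : EuclideanSpace ℝ (Fin d) × EuclideanSpace ℝ (Fin d) => dist p.1 p.2) ''
        E ×ˢ E := by
      ext t
      simp only [hA, Set.mem_ofPred_eq, Set.mem_image, Set.mem_prod, Prod.exists]
      exact ⟨fun ⟨x, hx, y, hy, h⟩ => ⟨x, y, ⟨hx, hy⟩, h.symm⟩,
        fun ⟨x, y, ⟨hx, hy⟩, h⟩ => ⟨x, hx, y, hy, h.symm⟩⟩
    rw [this]
    exact (hE.prod hE).image continuous_dist
  by_contra hvol
  have hA0 : volume A = 0 := by simpa using hvol
  set K : Set (EuclideanSpace ℝ (Fin d)) := (fun x => ‖x‖) ⁻¹' A with hK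
  have hKc : IsCompact K := by
    refine isCompact_of_isClosed_isBounded (hAc.isClosed.preimage continuous_norm) ?_
    obtain ⟨R, hR⟩ := hAc.isBounded.subset_closedBall 0
    refine (isBounded_closedBall (x := 0) (r := R)).subset fun x hx => ?_
    simpa using hR hx
  have hK0 : volume K = 0 :=
    volume_preimage_norm_eq_zero hd1 hAc.measurableSet hA0 hKc.measure_lt_top.ne
  have hνK := measure_eq_zero_of_integrable_norm_sq_measureFT _ hL2 hKc hK0
  rw [radialDistanceMeasure, Measure.map_apply (Continuous.measurable (by fun_prop))
    hKc.measurableSet] at hνK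
  have hEμ : ∀ᵐ x ∂μ, x ∈ E := hsupp
  have hprod : ∀ᵐ p ∂((μ.prod μ).prod σ), p.1.1 ∈ E ∧ p.1.2 ∈ E ∧
      p.2 ∈ sphere (0 : EuclideanSpace ℝ (Fin d)) 1 := by
    have h1 := Measure.quasiMeasurePreserving_fst (μ := μ.prod μ) (ν := σ)
    have h2 := Measure.quasiMeasurePreserving_snd (μ := μ.prod μ) (ν := σ)
    filter_upwards [h1.ae (Measure.quasiMeasurePreserving_fst.ae hEμ),
      h1.ae (Measure.quasiMeasurePreserving_snd.ae hEμ),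
      h2.ae (ae_restrict_mem isClosed_sphere.measurableSet)] with p hx hy hω
    exact ⟨hx, hy, hω⟩
  have hfalse : ∀ᵐ p ∂((μ.prod μ).prod σ), False := by
    filter_upwards [hprod, measure_eq_zero_iff_ae_notMem.1 hνK] with p ⟨hx, hy, hω⟩ hp
    refine hp ⟨p.1.1, hx, p.1.2, hy, ?_⟩
    simp [norm_smul, mem_sphere_zero_iff_norm.1 hω, dist_eq_norm]
  have huniv : ((μ.prod μ).prod σ) Set.univ = 0 := by simpa [ae_iff] using hfalse
  have hσuniv : σ Set.univ = 0 := by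
    rwa [← Set.univ_prod_univ, Measure.prod_prod, measure_univ, one_mul] at huniv
  exact hσpos.ne' (by simpa [hσ] using hσuniv)
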